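/- arXiv:2511.17650 — 6 statements merged into one kernel-verified Lean document; each statement's English description precedes it below -/
import Mathlib

section
/- For all n, k ∈ ℕ: for every j < k, C^j(n + 2^k) ≡ C^j(n) (mod 2) (so the length-k parity vectors of n and n + 2^k coincide), while C^k(n + 2^k) and C^k(n) have opposite parities, i.e., C^k(n + 2^k) mod 2 = 1 − (C^k(n) mod 2). -/
theorem shift_aux (α β : ℕ) (hα : Odd α) (C : ℕ → ℕ)
    (hC : ∀ n : ℕ, C n = if n % 2 = 0 then n / 2 else (α * n + β) / 2) (k : ℕ) :
    ∀ n c : ℕ, Odd c → (∀ j < k, C^[j] (n + c * 2 ^ k) % 2 = C^[j] n % 2) ∧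
    C^[k] (n + c * 2 ^ k) % 2 = 1 - C^[k] n % 2 := by
  induction k with
  | zero =>
    intro n c hc
    obtain ⟨m, rfl⟩ := hc
    simp
    omega
  | succ k ih =>
    intro n c hc
    have hpar : (n + c * 2 ^ (k + 1)) = n + 2 * (c * 2 ^ k) := by ring
    have key : ∃ d, Odd d ∧ C (n + c * 2 ^ (k + 1)) = C n + d * 2 ^ k := by
      rw [hpar, hC, hC n, Nat.add_mul_mod_self_left]
      split_ifs with h
      · exact ⟨c, hc, by omega⟩
      · refine ⟨α * c, hα.mul hc, ?_⟩
        have : α * (n + 2 * (c * 2 ^ k)) + β = α * n + β + 2 * (α * c * 2 ^ k) := by ring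
        rw [this]
        omega
    obtain ⟨d, hd, e⟩ := key
    obtain ⟨h1, h2⟩ := ih (C n) d hd
    constructor
    · intro j hj
      cases j with
      | zero => rw [hpar]; simp
      | succ j =>
        rw [Function.iterate_succ_apply, Function.iterate_succ_apply, e]
        exact h1 j (by omega)
    · rw [Function.iterate_succ_apply, Function.iterate_succ_apply, e]
      exact h2

/-- parity vectors of n and n + 2^k agree up to step k-1, and the
parities of C^k(n + 2^k) and C^k(n) are opposite. -/
theorem collatz_parity_vector_shift
    (α β : ℕ) (hα : Odd α) (hα0 : 0 < α) (hβ : Odd β) (hβ0 : 0 < β)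
    (hgcd : Nat.gcd α β = 1) (C : ℕ → ℕ)
    (hC : ∀ n : ℕ, C n = if n % 2 = 0 then n / 2 else (α * n + β) / 2)
    (n k : ℕ) :
    (∀ j < k, C^[j] (n + 2 ^ k) % 2 = C^[j] n % 2) ∧
    C^[k] (n + 2 ^ k) % 2 = 1 - C^[k] n % 2 := by
  simpa using shift_aux α β hα C hC k n 1 odd_one
end

section
/- For every k ∈ ℕ, the parity-vector map n ↦ P_k(n) = (C^0(n) mod 2, …, C^{k−1}(n) mod 2), restricted to the integers n with 1 ≤ n ≤ 2^k, is a bijection onto {0,1}^k. -/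
theorem collatz_aux (α β : ℕ) (hα : Odd α) (hβ : Odd β) (C : ℕ → ℕ)
    (hC : ∀ n : ℕ, C n = if n % 2 = 0 then n / 2 else (α * n + β) / 2) (k : ℕ) :
    ∀ m n : ℕ, (∀ j < k, C^[j] m % 2 = C^[j] n % 2) → m ≡ n [MOD 2 ^ k] := by
  induction k with
  | zero => intro m n _; simp [Nat.modEq_one]
  | succ k ih =>
    intro m n h
    have h0 : m % 2 = n % 2 := by simpa using h 0 (by omega)
    have h1 : C m ≡ C n [MOD 2 ^ k] := by
      apply ih
      intro j hj
      have := h (j + 1) (by omega)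
      simpa [Function.iterate_succ_apply] using this
    have h2 : 2 * C m ≡ 2 * C n [MOD 2 ^ (k + 1)] := by
      rw [pow_succ']
      exact h1.mul_left' 2
    by_cases hm : m % 2 = 0
    · have e1 : 2 * C m = m := by rw [hC, if_pos hm]; omega
      have e2 : 2 * C n = n := by rw [hC, if_pos (h0 ▸ hm)]; omega
      rwa [e1, e2] at h2
    · have key : ∀ x, ¬ x % 2 = 0 → 2 * C x = α * x + β := by
        intro x hx
        rw [hC, if_neg hx]
        have hx' : Odd x := Nat.odd_iff.2 (by omega)
        exact Nat.two_mul_div_two_of_even ((hα.mul hx').add_odd hβ)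
      rw [key m hm, key n (h0 ▸ hm)] at h2
      have h3 := Nat.ModEq.add_right_cancel' β h2
      refine Nat.ModEq.cancel_left_of_coprime ?_ h3
      exact Nat.Coprime.pow_left _ (Nat.coprime_two_left.2 hα)

/-- the length-k parity-vector map is a bijection from
[1, 2^k] onto {0,1}^k (modelled as Fin k → ZMod 2). -/
theorem collatz_parity_vector_bijective
    (α β : ℕ) (hα : Odd α) (hα0 : 0 < α) (hβ : Odd β) (hβ0 : 0 < β)
    (hgcd : Nat.gcd α β = 1) (C : ℕ → ℕ)
    (hC : ∀ n : ℕ, C n = if n % 2 = 0 then n / 2 else (α * n + β) / 2)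
    (k : ℕ) :
    Set.BijOn (fun n : ℕ => fun j : Fin k => ((C^[(j : ℕ)] n : ℕ) : ZMod 2))
      (Set.Icc 1 (2 ^ k)) (Set.univ : Set (Fin k → ZMod 2)) := by
  have hinj : Set.InjOn (fun n : ℕ => fun j : Fin k => ((C^[(j : ℕ)] n : ℕ) : ZMod 2))
      (Set.Icc 1 (2 ^ k)) := by
    intro m hm n hn h
    have h1 : m ≡ n [MOD 2 ^ k] := by
      apply collatz_aux α β hα hβ C hC
      intro j hj
      exact (ZMod.natCast_eq_natCast_iff' _ _ 2).1 (congrFun h ⟨j, hj⟩)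
    obtain ⟨hm1, hm2⟩ := hm
    obtain ⟨hn1, hn2⟩ := hn
    have h2 : ((2 ^ k : ℕ) : ℤ) ∣ (n : ℤ) - m := Nat.modEq_iff_dvd.1 h1
    have h3 := Int.eq_zero_of_abs_lt_dvd h2 (by rw [abs_lt]; constructor <;> omega)
    omega
  refine ⟨Set.mapsTo_univ _ _, hinj, ?_⟩
  have := Set.eq_of_subset_of_ncard_le (Set.subset_univ
    ((fun n : ℕ => fun j : Fin k => ((C^[(j : ℕ)] n : ℕ) : ZMod 2)) '' (Set.Icc 1 (2 ^ k)))) (by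
      rw [Set.ncard_image_of_injOn hinj, Set.ncard_univ, Nat.card_eq_fintype_card,
        ← Finset.coe_Icc, Set.ncard_coe_finset]
      simp [ZMod.card]) Set.finite_univ
  exact this.ge
end

section
/- For every u ∈ H one has ‖u‖ ≤ ‖𝐂u‖ ≤ √2·‖u‖. -/
/-- ‖u‖ ≤ ‖𝐂u‖ ≤ √2·‖u‖ for the Collatz operator on ℓ². -/
theorem collatz_operator_norm_bounds
    (α β : ℕ) (hα : Odd α) (hα0 : 0 < α) (hβ : Odd β) (hβ0 : 0 < β)
    (hgcd : Nat.gcd α β = 1) (C : ℕ → ℕ)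
    (hC : ∀ n : ℕ, C n = if n % 2 = 0 then n / 2 else (α * n + β) / 2)
    (T : lp (fun _ : ℕ => ℂ) 2 →L[ℂ] lp (fun _ : ℕ => ℂ) 2)
    (hT : ∀ (u : lp (fun _ : ℕ => ℂ) 2) (n : ℕ), T u n = u (C n))
    (u : lp (fun _ : ℕ => ℂ) 2) :
    ‖u‖ ≤ ‖T u‖ ∧ ‖T u‖ ≤ Real.sqrt 2 * ‖u‖ := by
  have key : ∀ v : lp (fun _ : ℕ => ℂ) 2, HasSum (fun n => ‖v n‖ ^ 2) (‖v‖ ^ 2) := by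
    intro v
    have h := lp.hasSum_norm (p := 2) (by norm_num) v
    simpa using h
  have he : ∀ k, C (2 * k) = k := by
    intro k; rw [hC]; simp
  obtain ⟨a, ha⟩ := hα
  obtain ⟨b, hb⟩ := hβ
  have ho : ∀ k, C (2 * k + 1) = α * k + (a + b + 1) := by
    intro k
    rw [hC, if_neg (by omega)]
    have : α * (2 * k + 1) + β = 2 * (α * k + (a + b + 1)) := by
      rw [hb, ha]; ring
    rw [this]; simp
  have hinj : Function.Injective (fun k => C (2 * k + 1)) := by
    intro x y h
    simp only [ho] at h
    exact Nat.eq_of_mul_eq_mul_left hα0 (by omega)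
  have hu := key u
  have hTu := key (T u)
  simp only [hT] at hTu
  have hs2 : Summable (fun k => ‖u (C (2 * k + 1))‖ ^ 2) := hu.summable.comp_injective hinj
  have hle : ∑' k, ‖u (C (2 * k + 1))‖ ^ 2 ≤ ‖u‖ ^ 2 := by
    rw [← hu.tsum_eq]
    exact tsum_comp_le_tsum_of_inj hu.summable (fun _ => by positivity) hinj
  have h0 : 0 ≤ ∑' k, ‖u (C (2 * k + 1))‖ ^ 2 := tsum_nonneg (fun _ => by positivity)
  have heq : ‖T u‖ ^ 2 = ‖u‖ ^ 2 + ∑' k, ‖u (C (2 * k + 1))‖ ^ 2 := by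
    refine hTu.unique (HasSum.even_add_odd ?_ hs2.hasSum)
    simpa only [he] using hu
  constructor
  · exact le_of_sq_le_sq (by linarith) (norm_nonneg _)
  · refine le_of_sq_le_sq ?_ (by positivity)
    rw [mul_pow, Real.sq_sqrt (by norm_num)]
    linarith
end

section
/- (1) If u ∈ H satisfies u(m) = 0 for every m ∈ ℕ admitting an odd preimage under C (i.e., for every m such that there exists an odd j ∈ ℕ with αj+β = 2m), then ‖𝐂u‖ = ‖u‖. (2) If u ∈ H satisfies u(m) = 0 for every m ∈ ℕ admitting no odd preimage under C, then ‖𝐂u‖ = √2·‖u‖. (3) The operator norm of 𝐂 equals √2. -/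
/-- isometry of 𝐂 on sequences vanishing at frequencies with an odd
preimage, the factor √2 on sequences supported on frequencies with an odd
preimage, and the operator norm of 𝐂 equals √2. -/
theorem collatz_operator_isometry_and_norm
    (α β : ℕ) (hα : Odd α) (hα0 : 0 < α) (hβ : Odd β) (hβ0 : 0 < β)
    (hgcd : Nat.gcd α β = 1) (C : ℕ → ℕ)
    (hC : ∀ n : ℕ, C n = if n % 2 = 0 then n / 2 else (α * n + β) / 2)
    (T : lp (fun _ : ℕ => ℂ) 2 →L[ℂ] lp (fun _ : ℕ => ℂ) 2)
    (hT : ∀ (u : lp (fun _ : ℕ => ℂ) 2) (n : ℕ), T u n = u (C n)) :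
    (∀ u : lp (fun _ : ℕ => ℂ) 2,
      (∀ m : ℕ, (∃ j : ℕ, j % 2 = 1 ∧ α * j + β = 2 * m) → u m = 0) →
      ‖T u‖ = ‖u‖) ∧
    (∀ u : lp (fun _ : ℕ => ℂ) 2,
      (∀ m : ℕ, ¬ (∃ j : ℕ, j % 2 = 1 ∧ α * j + β = 2 * m) → u m = 0) →
      ‖T u‖ = Real.sqrt 2 * ‖u‖) ∧
    ‖T‖ = Real.sqrt 2 := by
  classical
  have key : ∃ g : ℕ → ℕ, Function.Injective g ∧ (∀ k, C (2 * k + 1) = g k) ∧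
      ∀ m, (∃ j : ℕ, j % 2 = 1 ∧ α * j + β = 2 * m) ↔ m ∈ Set.range g := by
    obtain ⟨a, rfl⟩ := hα
    obtain ⟨b, rfl⟩ := hβ
    have e : ∀ k, (2 * a + 1) * (2 * k + 1) + (2 * b + 1) = 2 * ((2 * a + 1) * k + a + b + 1) := by
      intro k; ring
    refine ⟨fun k => (2 * a + 1) * k + a + b + 1, ?_, ?_, ?_⟩
    · intro x y h
      have h' : (2 * a + 1) * x = (2 * a + 1) * y := by
        simp only at h; omega
      exact Nat.eq_of_mul_eq_mul_left (by omega) h'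
    · intro k
      rw [hC, if_neg (by omega), e]
      simp
    · intro m
      constructor
      · rintro ⟨j, hj, h⟩
        refine ⟨j / 2, ?_⟩
        have h2 := e (j / 2)
        rw [show 2 * (j / 2) + 1 = j by omega, h] at h2
        simp only; omega
      · rintro ⟨k, rfl⟩
        exact ⟨2 * k + 1, by omega, e k⟩
  obtain ⟨g, hg, hCg, hr⟩ := key
  have hCe : ∀ k, C (2 * k) = k := by
    intro k; rw [hC, if_pos (by omega)]; omega
  have hs : ∀ u : lp (fun _ : ℕ => ℂ) 2, HasSum (fun n => ‖u n‖ ^ 2) (‖u‖ ^ 2) := by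
    intro u
    have := lp.hasSum_norm (p := 2) (by norm_num) u
    simpa using this
  have main : ∀ u : lp (fun _ : ℕ => ℂ) 2, ‖T u‖ ^ 2 = ‖u‖ ^ 2 + ∑' k, ‖u (g k)‖ ^ 2 := by
    intro u
    have h1 : HasSum (fun k => ‖T u (2 * k)‖ ^ 2) (‖u‖ ^ 2) := by
      simpa only [hT, hCe] using hs u
    have h2 : HasSum (fun k => ‖T u (2 * k + 1)‖ ^ 2) (∑' k, ‖u (g k)‖ ^ 2) := by
      simp only [hT, hCg]
      exact ((hs u).summable.comp_injective hg).hasSum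
    exact (hs (T u)).unique (HasSum.even_add_odd (f := fun n => ‖T u n‖ ^ 2) h1 h2)
  have p2 : ∀ u : lp (fun _ : ℕ => ℂ) 2,
      (∀ m : ℕ, ¬ (∃ j : ℕ, j % 2 = 1 ∧ α * j + β = 2 * m) → u m = 0) →
      ‖T u‖ = Real.sqrt 2 * ‖u‖ := by
    intro u hu
    have h0 : ∑' k, ‖u (g k)‖ ^ 2 = ‖u‖ ^ 2 := by
      rw [← (hs u).tsum_eq]
      refine hg.tsum_eq (f := fun n => ‖u n‖ ^ 2) ?_
      intro m hm
      by_contra hn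
      exact hm (by simp [hu m (fun h => hn ((hr m).1 h))])
    have h := main u
    rw [h0] at h
    refine (sq_eq_sq₀ (norm_nonneg _) (by positivity)).1 ?_
    rw [h, mul_pow, Real.sq_sqrt (by norm_num)]
    ring
  refine ⟨?_, p2, le_antisymm ?_ ?_⟩
  · intro u hu
    have h0 : ∀ k, u (g k) = 0 := fun k => hu _ ((hr _).2 ⟨k, rfl⟩)
    have h := main u
    simp only [h0] at h
    refine (sq_eq_sq₀ (norm_nonneg _) (norm_nonneg _)).1 ?_
    simpa using h
  · refine T.opNorm_le_bound (by positivity) fun u => ?_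
    refine (sq_le_sq₀ (norm_nonneg _) (by positivity)).1 ?_
    rw [main, mul_pow, Real.sq_sqrt (by norm_num)]
    have : ∑' k, ‖u (g k)‖ ^ 2 ≤ ‖u‖ ^ 2 := by
      rw [← (hs u).tsum_eq]
      exact tsum_comp_le_tsum_of_inj (f := fun n => ‖u n‖ ^ 2) (hs u).summable
        (fun _ => by positivity) hg
    linarith
  · let v : lp (fun _ : ℕ => ℂ) 2 := lp.single 2 (g 0) (1 : ℂ)
    have hv : ‖v‖ = 1 := by
      have := lp.norm_single (p := 2) (E := fun _ : ℕ => ℂ) (by norm_num) (g 0) (1 : ℂ)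
      simpa [v] using this
    have h := p2 v (by
      intro m hm
      have hne : m ≠ g 0 := fun h => hm ((hr m).2 ⟨0, h.symm⟩)
      simp [v, lp.single_apply, hne])
    have h' := T.le_opNorm v
    rw [h, hv] at h'
    simpa using h'
end

section
/- (1) 𝐂 is injective and its range is closed in H. (2) The operator 𝐂* ∘ 𝐂 : H → H, where 𝐂* denotes the Hilbert-space adjoint of 𝐂, is bijective. -/
/-- 𝐂 is injective with closed range, and 𝐂*𝐂 is bijective. -/
theorem collatz_operator_injective_closed_range_adjoint_bijective
    (α β : ℕ) (hα : Odd α) (hα0 : 0 < α) (hβ : Odd β) (hβ0 : 0 < β)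
    (hgcd : Nat.gcd α β = 1) (C : ℕ → ℕ)
    (hC : ∀ n : ℕ, C n = if n % 2 = 0 then n / 2 else (α * n + β) / 2)
    (T : lp (fun _ : ℕ => ℂ) 2 →L[ℂ] lp (fun _ : ℕ => ℂ) 2)
    (hT : ∀ (u : lp (fun _ : ℕ => ℂ) 2) (n : ℕ), T u n = u (C n)) :
    Function.Injective (⇑T) ∧ IsClosed (Set.range (⇑T)) ∧
    Function.Bijective (⇑(ContinuousLinearMap.adjoint T ∘L T)) := by
  have h2 : 0 < (2 : ENNReal).toReal := by norm_num
  have key : ∀ u, ‖u‖ ≤ ‖T u‖ := by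
    intro u
    have h1 := lp.hasSum_norm h2 u
    have h3 := lp.hasSum_norm h2 (T u)
    have hle : ‖u‖ ^ (2 : ENNReal).toReal ≤ ‖T u‖ ^ (2 : ENNReal).toReal := by
      refine hasSum_le_inj (fun n : ℕ => 2 * n) (fun a b h => by simpa using h) ?_ ?_ h1 h3
      · intro c _
        positivity
      · intro n
        rw [hT, hC]
        simp
    exact (Real.rpow_le_rpow_iff (norm_nonneg _) (norm_nonneg _) h2).1 hle
  have anti : AntilipschitzWith 1 T :=
    T.antilipschitz_of_bound (by simpa using key)
  have hin : ∀ u, inner ℂ ((ContinuousLinearMap.adjoint T ∘L T) u) u = ((‖T u‖ ^ 2 : ℝ) : ℂ) := by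
    intro u
    rw [ContinuousLinearMap.comp_apply, ContinuousLinearMap.adjoint_inner_left,
      inner_self_eq_norm_sq_to_K]
    norm_cast
  have keyS : ∀ u, ‖u‖ ≤ ‖(ContinuousLinearMap.adjoint T ∘L T) u‖ := by
    intro u
    have h := norm_inner_le_norm (𝕜 := ℂ) ((ContinuousLinearMap.adjoint T ∘L T) u) u
    rw [hin, Complex.norm_real, Real.norm_of_nonneg (by positivity)] at h
    have hk := key u
    rcases (norm_nonneg u).eq_or_lt with h0 | h0
    · rw [← h0]; exact norm_nonneg _
    · have : ‖u‖ * ‖u‖ ≤ ‖T u‖ ^ 2 := by nlinarith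
      exact le_of_mul_le_mul_right (this.trans h) h0
  have antiS : AntilipschitzWith 1 (ContinuousLinearMap.adjoint T ∘L T) :=
    (ContinuousLinearMap.adjoint T ∘L T).antilipschitz_of_bound (by simpa using keyS)
  refine ⟨anti.injective, anti.isClosed_range T.uniformContinuous, antiS.injective, ?_⟩
  have hcl := antiS.isClosed_range (ContinuousLinearMap.adjoint T ∘L T).uniformContinuous
  generalize hS : ContinuousLinearMap.adjoint T ∘L T = S at *
  have hc : IsComplete ((LinearMap.range S.toLinearMap : Submodule ℂ _) :
      Set (lp (fun _ : ℕ => ℂ) 2)) := by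
    rw [LinearMap.coe_range]
    exact hcl.isComplete
  haveI : CompleteSpace (LinearMap.range S.toLinearMap) := hc.completeSpace_coe
  have htop : LinearMap.range S.toLinearMap = ⊤ := by
    rw [← Submodule.orthogonal_eq_bot_iff, Submodule.eq_bot_iff]
    intro v hv
    have h := (Submodule.mem_orthogonal _ v).1 hv (S v) ⟨v, rfl⟩
    rw [hin] at h
    have h' : ‖T v‖ = 0 := by
      have : ‖T v‖ ^ 2 = 0 := by exact_mod_cast h
      simpa using this
    have := key v
    rw [h'] at this
    exact norm_le_zero_iff.1 this
  exact LinearMap.range_eq_top.1 htop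
end

section
/- Let u₀ ∈ H and let u : ℝ → H be a continuous function satisfying u(t) = u₀ + ∫₀ᵗ 𝐂(u(s)) ds for all t ≥ 0. Let (n_j)_{j∈ℕ} be a sequence of positive integers with n_{j+1} = C(n_j) for all j, and assume the map j ↦ n_j is injective (a divergent Collatz orbit). Then for every j ∈ ℕ and every t ≥ 0, the coordinate of u(t) at index n_j is given by the absolutely convergent series (u(t))(n_j) = Σ_{k=0}^{∞} (u₀)(n_{j+k}) · t^k/k!. -/
/-- along a divergent Collatz orbit (n_j), the coordinates of a
solution of the Collatz flow are given by the absolutely convergent series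
(u(t))(n_j) = Σ_k (u₀)(n_{j+k}) t^k/k!. -/
theorem collatz_flow_divergent_orbit_series
    (α β : ℕ) (hα : Odd α) (hα0 : 0 < α) (hβ : Odd β) (hβ0 : 0 < β)
    (hgcd : Nat.gcd α β = 1) (C : ℕ → ℕ)
    (hC : ∀ n : ℕ, C n = if n % 2 = 0 then n / 2 else (α * n + β) / 2)
    (CZ : ℤ → ℤ) (hCZ : ∀ n : ℕ, CZ n = C n) (hCZodd : ∀ n : ℤ, CZ (-n) = -CZ n)
    (T : lp (fun _ : ℤ => ℂ) 2 →L[ℂ] lp (fun _ : ℤ => ℂ) 2)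
    (hT : ∀ (u : lp (fun _ : ℤ => ℂ) 2) (n : ℤ), T u n = u (CZ n))
    (u₀ : lp (fun _ : ℤ => ℂ) 2) (u : ℝ → lp (fun _ : ℤ => ℂ) 2)
    (hu : Continuous u)
    (huint : ∀ t : ℝ, 0 ≤ t → u t = u₀ + ∫ s in (0:ℝ)..t, T (u s))
    (nseq : ℕ → ℕ) (hpos : ∀ j, 0 < nseq j)
    (hiter : ∀ j, nseq (j + 1) = C (nseq j))
    (hinj : Function.Injective nseq)
    (j : ℕ) (t : ℝ) (ht : 0 ≤ t) :
    Summable (fun k : ℕ => ‖u₀ (nseq (j + k) : ℤ) * (t : ℂ) ^ k / (Nat.factorial k)‖) ∧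
    HasSum (fun k : ℕ => u₀ (nseq (j + k) : ℤ) * (t : ℂ) ^ k / (Nat.factorial k))
      (u t (nseq j : ℤ)) := by
  have hTk : ∀ (k j : ℕ) (v : lp (fun _ : ℤ => ℂ) 2),
      (T ^ k) v (nseq j : ℤ) = v (nseq (j + k) : ℤ) := by
    intro k
    induction k with
    | zero => intro j v; simp
    | succ k ih =>
      intro j v
      rw [pow_succ, mul_apply_eq_comp, ih, hT, hCZ, ← hiter]
      rfl
  have hg : ∀ s : ℝ, HasDerivAt (fun s : ℝ => (NormedSpace.exp ((s : ℂ) • T)) u₀)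
      (T (NormedSpace.exp ((s : ℂ) • T) u₀)) s := by
    intro s
    have h1 := (hasDerivAt_exp_smul_const' (𝕂 := ℂ) T (s : ℂ))
    have h2 := (h1.clm_apply (hasDerivAt_const (s : ℂ) u₀)).scomp_of_eq s
      (Complex.ofRealCLM.hasDerivAt (x := s)) rfl
    simpa [Function.comp_def] using h2
  have hU : ∀ s : ℝ, HasDerivAt (fun s : ℝ => u₀ + ∫ r in (0:ℝ)..s, T (u r)) (T (u s)) s := by
    intro s
    have hc : Continuous fun r => T (u r) := T.continuous.comp hu
    exact (intervalIntegral.integral_hasDerivAt_right (hc.intervalIntegrable _ _)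
      hc.stronglyMeasurable.stronglyMeasurableAtFilter hc.continuousAt).const_add _
  have huniq : u t = NormedSpace.exp ((t : ℂ) • T) u₀ := by
    have h0 : u 0 = u₀ := by simpa using huint 0 le_rfl
    have key := ODE_solution_unique (v := fun _ x => T x) (K := ‖T‖₊) (a := 0) (b := t)
      (f := u) (g := fun s : ℝ => (NormedSpace.exp ((s : ℂ) • T)) u₀)
      (fun _ => T.lipschitz) hu.continuousOn
      (fun s hs => (hU s).hasDerivWithinAt.congr
        (fun r hr => huint r (hs.1.trans hr)) (huint s hs.1))
      (fun s _ => (hg s).continuousAt.continuousWithinAt)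
      (fun s _ => (hg s).hasDerivWithinAt) (by simp [h0])
    exact key ⟨ht, le_rfl⟩
  have hs : HasSum (fun k : ℕ => u₀ (nseq (j + k) : ℤ) * (t : ℂ) ^ k / (Nat.factorial k))
      (u t (nseq j : ℤ)) := by
    rw [huniq]
    have h1 := NormedSpace.exp_series_hasSum_exp' (𝕂 := ℂ) ((t : ℂ) • T)
    have h2 := h1.mapL (ContinuousLinearMap.apply ℂ (lp (fun _ : ℤ => ℂ) 2) u₀)
    have h3 := h2.mapL (lp.evalCLM ℂ (fun _ : ℤ => ℂ) 2 (nseq j : ℤ))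
    have heq : (fun k : ℕ => u₀ (nseq (j + k) : ℤ) * (t : ℂ) ^ k / (Nat.factorial k)) =
        fun k : ℕ => (((k.factorial : ℂ)⁻¹ • ((t : ℂ) • T) ^ k) u₀) (nseq j : ℤ) := by
      funext k
      rw [smul_pow]
      change _ = (k.factorial : ℂ)⁻¹ * ((t : ℂ) ^ k * ((T ^ k) u₀) (nseq j : ℤ))
      rw [hTk]
      ring
    rw [heq]
    exact h3
  exact ⟨hs.summable.norm, hs⟩
end
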